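/- Let n ≥ m ≥ 1, let A and B be finite alphabets and let φ : A* → B* be a monoid morphism. If u, v ∈ A* satisfy u ⊳_{m,n} v, then φ(u) ⊳_{m,n} φ(v) (with the relation ⊳_{m,n} on B* defined via rankers over B); likewise, if u ⊲_{m,n} v then φ(u) ⊲_{m,n} φ(v). -/

import Mathlib

namespace RankerPaper

variable {A : Type*} [DecidableEq A]

/-- Letters of rankers: `X a` ("next `a` to the right") and `Y a` ("next `a` to the left"). -/
inductive RLetter (A : Type*) where
  | X : A → RLetter A
  | Y : A → RLetter A
  deriving DecidableEq

/-- Least `a`-position of `u` strictly greater than `q` (positions are 1-indexed). -/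
def nextOcc (u : List A) (a : A) (q : ℕ) : Option ℕ :=
  ((List.range (u.length + 2)).filter (fun i => decide (q < i ∧ u[i-1]? = some a))).head?

/-- Greatest `a`-position of `u` strictly less than `q` (positions are 1-indexed). -/
def prevOcc (u : List A) (a : A) (q : ℕ) : Option ℕ :=
  ((List.range (u.length + 2)).filter
    (fun i => decide (1 ≤ i ∧ i < q ∧ u[i-1]? = some a))).getLast?

/-- One evaluation step of a ranker letter from position `q`. -/
def stepR (u : List A) : RLetter A → ℕ → Option ℕ
  | .X a, q => nextOcc u a q
  | .Y a, q => prevOcc u a q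

/-- Evaluation of a ranker from position `q`, processing letters left to right. -/
def evalFrom (u : List A) : List (RLetter A) → ℕ → Option ℕ
  | [], q => some q
  | z :: r, q => (stepR u z q).bind (evalFrom u r)

/-- Starting position: `0` for an `X`-letter, `|u|+1` for a `Y`-letter. -/
def startPos (u : List A) : RLetter A → ℕ
  | .X _ => 0
  | .Y _ => u.length + 1

/-- The position `r(u)` defined by the ranker `r` on `u` (`none` if undefined;
empty rankers are considered undefined, rankers being nonempty words). -/
def evalR (u : List A) (r : List (RLetter A)) : Option ℕ :=
  match r with
  | [] => none
  | z :: t => evalFrom u (z :: t) (startPos u z)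

/-- `r` is defined on `u`. -/
def Defined (u : List A) (r : List (RLetter A)) : Prop := (evalR u r).isSome

/-- The position `r(u)` (defaulting to `0` when undefined). -/
def pos (u : List A) (r : List (RLetter A)) : ℕ := (evalR u r).getD 0

/-- Do two ranker letters have the same direction? -/
def sameDir : RLetter A → RLetter A → Bool
  | .X _, .X _ => true
  | .Y _, .Y _ => true
  | _, _ => false

/-- Number of (alternating) blocks of a ranker. -/
def numBlocks : List (RLetter A) → ℕ
  | [] => 0
  | [_] => 1
  | z :: w :: t => (if sameDir z w then 0 else 1) + numBlocks (w :: t)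

def startsX (r : List (RLetter A)) : Prop := ∃ a t, r = RLetter.X a :: t
def startsY (r : List (RLetter A)) : Prop := ∃ a t, r = RLetter.Y a :: t
def endsX (r : List (RLetter A)) : Prop := ∃ a, r.getLast? = some (RLetter.X a)
def endsY (r : List (RLetter A)) : Prop := ∃ a, r.getLast? = some (RLetter.Y a)

/-- `R^X_{m,n}`: rankers with exactly `m` blocks, depth `n`, starting with an `X`-block. -/
def RX (m n : ℕ) (r : List (RLetter A)) : Prop :=
  numBlocks r = m ∧ r.length = n ∧ startsX r

/-- `R^Y_{m,n}`: rankers with exactly `m` blocks, depth `n`, starting with a `Y`-block. -/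
def RY (m n : ℕ) (r : List (RLetter A)) : Prop :=
  numBlocks r = m ∧ r.length = n ∧ startsY r

/-- `uR^X_{m,n}`. -/
def uRX (m n : ℕ) (r : List (RLetter A)) : Prop :=
  (∃ m' n', m' ≤ m ∧ n' ≤ n ∧ RX m' n' r) ∨ (∃ m' n', m' < m ∧ n' < n ∧ RY m' n' r)

/-- `uR^Y_{m,n}`. -/
def uRY (m n : ℕ) (r : List (RLetter A)) : Prop :=
  (∃ m' n', m' ≤ m ∧ n' ≤ n ∧ RY m' n' r) ∨ (∃ m' n', m' < m ∧ n' < n ∧ RX m' n' r)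

/-- `uR_{m,n} = uR^X_{m,n} ∪ uR^Y_{m,n}`. -/
def uR (m n : ℕ) (r : List (RLetter A)) : Prop := uRX m n r ∨ uRY m n r

/-- `uR^X_m = ∪_{n ≥ m} uR^X_{m,n}`. -/
def uRXm (m : ℕ) (r : List (RLetter A)) : Prop := ∃ n, m ≤ n ∧ uRX m n r

/-- `uR^Y_m = ∪_{n ≥ m} uR^Y_{m,n}`. -/
def uRYm (m : ℕ) (r : List (RLetter A)) : Prop := ∃ n, m ≤ n ∧ uRY m n r

/-- `r = Z₁ ⋯ Z_n` is condensed on `u`: it is defined on `u` and there is a chain of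
open intervals `(0;|u|+1) = (i₀;j₀) ⊃ (i₁;j₁) ⊃ ⋯ ⊃ (i_{n-1};j_{n-1}) ∋ r(u)`
updated according to the pairs `Z_ℓ Z_{ℓ+1}`. -/
def Condensed (u : List A) (r : List (RLetter A)) : Prop :=
  ∃ (p : ℕ) (i j : ℕ → ℕ),
    evalR u r = some p ∧
    i 0 = 0 ∧ j 0 = u.length + 1 ∧
    (∀ ℓ a b, 1 ≤ ℓ → r[ℓ-1]? = some (RLetter.X a) → r[ℓ]? = some (RLetter.X b) →
        nextOcc u a (i (ℓ-1)) = some (i ℓ) ∧ j ℓ = j (ℓ-1)) ∧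
    (∀ ℓ a b, 1 ≤ ℓ → r[ℓ-1]? = some (RLetter.Y a) → r[ℓ]? = some (RLetter.Y b) →
        i ℓ = i (ℓ-1) ∧ prevOcc u a (j (ℓ-1)) = some (j ℓ)) ∧
    (∀ ℓ a b, 1 ≤ ℓ → r[ℓ-1]? = some (RLetter.X a) → r[ℓ]? = some (RLetter.Y b) →
        i ℓ = i (ℓ-1) ∧ nextOcc u a (i (ℓ-1)) = some (j ℓ)) ∧
    (∀ ℓ a b, 1 ≤ ℓ → r[ℓ-1]? = some (RLetter.Y a) → r[ℓ]? = some (RLetter.X b) →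
        prevOcc u a (j (ℓ-1)) = some (i ℓ) ∧ j ℓ = j (ℓ-1)) ∧
    (∀ ℓ, 1 ≤ ℓ → ℓ < r.length →
        i (ℓ-1) ≤ i ℓ ∧ j ℓ ≤ j (ℓ-1) ∧ (i (ℓ-1) < i ℓ ∨ j ℓ < j (ℓ-1))) ∧
    i (r.length - 1) < p ∧ p < j (r.length - 1)

/-- `u` and `v` agree on rankers from the set `R`. -/
def AgreeDef (R : List (RLetter A) → Prop) (u v : List A) : Prop :=
  ∀ r, R r → (Defined u r ↔ Defined v r)

/-- `u` and `v` agree on condensed rankers from the set `R`. -/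
def AgreeCond (R : List (RLetter A) → Prop) (u v : List A) : Prop :=
  ∀ r, R r → (Condensed u r ↔ Condensed v r)

/-- `u ⊳_{m,n} v`. -/
def trir (m n : ℕ) (u v : List A) : Prop := AgreeCond (uRX m n) u v

/-- `u ⊲_{m,n} v`. -/
def tril (m n : ℕ) (u v : List A) : Prop := AgreeCond (uRY m n) u v

/-- The alphabet (set of letters) of a word. -/
def alph (u : List A) : Finset A := u.toFinset

/-- Condition (WI 1). -/
def WI1 (m n : ℕ) (u v : List A) : Prop := AgreeDef (uR m n) u v

/-- Condition (WI 2). -/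
def WI2 (m n : ℕ) (u v : List A) : Prop :=
  ∀ r r', uR m n r → uR (m-1) (n-1) r' →
    Defined u r → Defined v r → Defined u r' → Defined v r' →
    compare (pos u r) (pos u r') = compare (pos v r) (pos v r')

/-- Condition (WI 3). -/
def WI3 (m n : ℕ) (u v : List A) : Prop :=
  ∀ r r', uR m n r → uR m (n-1) r' →
    ((endsX r ∧ endsY r') ∨ (endsY r ∧ endsX r')) →
    Defined u r → Defined v r → Defined u r' → Defined v r' →
    compare (pos u r) (pos u r') = compare (pos v r) (pos v r')

/-- Condition (WI 1c). -/
def WI1c (m n : ℕ) (u v : List A) : Prop := AgreeCond (uR m n) u v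

/-- Condition (WI 2c). -/
def WI2c (m n : ℕ) (u v : List A) : Prop :=
  ∀ r r', uR m n r → uR (m-1) (n-1) r' →
    Condensed u r → Condensed v r → Condensed u r' → Condensed v r' →
    compare (pos u r) (pos u r') = compare (pos v r) (pos v r')

/-- Condition (WI 3c). -/
def WI3c (m n : ℕ) (u v : List A) : Prop :=
  ∀ r r', uR m n r → uR m (n-1) r' →
    ((endsX r ∧ endsY r') ∨ (endsY r ∧ endsX r')) →
    Condensed u r → Condensed v r → Condensed u r' → Condensed v r' →
    compare (pos u r) (pos u r') = compare (pos v r) (pos v r')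


/-! Specification of the occurrence functions -/

theorem sublist_head_spec (n : ℕ) (P : ℕ → Bool) (p : ℕ) :
    ((List.range n).filter P).head? = some p ↔
      p < n ∧ P p = true ∧ ∀ k, k < p → P k = false := by
  rw [List.head?_filter, List.find?_range_eq_some]
  constructor
  · rintro ⟨h1, h2, h3⟩
    refine ⟨by simpa using h2, h1, fun k hk => by simpa using h3 k hk⟩
  · rintro ⟨h1, h2, h3⟩
    refine ⟨h2, by simpa using h1, fun k hk => by simpa using h3 k hk⟩

theorem range_last_spec (n : ℕ) (P : ℕ → Bool) (p : ℕ) :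
    ((List.range n).filter P).getLast? = some p ↔
      p < n ∧ P p = true ∧ ∀ k, p < k → k < n → P k = false := by
  induction n with
  | zero => simp
  | succ n ih =>
    rw [List.range_succ, List.filter_append]
    by_cases h : P n = true
    · simp only [List.filter_cons, h, if_true, List.filter_nil, List.getLast?_append,
        List.getLast?_singleton, Option.some_or, Option.some.injEq]
      constructor
      · rintro rfl
        exact ⟨by omega, h, fun k h1 h2 => by omega⟩
      · rintro ⟨h1, h2, h3⟩
        by_contra hne
        have := h3 n (by omega) (by omega)
        simp_all
    · simp only [List.filter_cons, h, List.filter_nil, List.append_nil]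
      simp only [Bool.false_eq_true, if_false, List.append_nil]
      rw [ih]
      constructor
      · rintro ⟨h1, h2, h3⟩
        refine ⟨by omega, h2, fun k hk hk2 => ?_⟩
        rcases Nat.lt_succ_iff_lt_or_eq.1 hk2 with h4 | rfl
        · exact h3 k hk h4
        · simpa using h
      · rintro ⟨h1, h2, h3⟩
        have : p ≠ n := by rintro rfl; exact h h2
        exact ⟨by omega, h2, fun k hk hk2 => h3 k hk (by omega)⟩

theorem nextOcc_spec (u : List A) (a : A) (q p : ℕ) :
    nextOcc u a q = some p ↔
      q < p ∧ u[p-1]? = some a ∧ ∀ k, q < k → k < p → u[k-1]? ≠ some a := by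
  unfold nextOcc
  rw [sublist_head_spec]
  simp only [decide_eq_true_eq, decide_eq_false_iff_not, not_and]
  constructor
  · rintro ⟨_, ⟨h1, h2⟩, h3⟩
    exact ⟨h1, h2, fun k h4 h5 => h3 k h5 h4⟩
  · rintro ⟨h1, h2, h3⟩
    have := (List.getElem?_eq_some_iff.1 h2).1
    exact ⟨by omega, ⟨h1, h2⟩, fun k h4 h5 => h3 k h5 h4⟩

theorem prevOcc_spec (u : List A) (a : A) (q p : ℕ) :
    prevOcc u a q = some p ↔
      1 ≤ p ∧ p < q ∧ u[p-1]? = some a ∧ ∀ k, p < k → k < q → u[k-1]? ≠ some a := by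
  unfold prevOcc
  rw [range_last_spec]
  simp only [decide_eq_true_eq, decide_eq_false_iff_not, not_and]
  constructor
  · rintro ⟨_, ⟨h1, h2, h3⟩, h4⟩
    refine ⟨h1, h2, h3, fun k h5 h6 h7 => ?_⟩
    have := (List.getElem?_eq_some_iff.1 h7).1
    exact h4 k h5 (by omega) (by omega) h6 h7
  · rintro ⟨h1, h2, h3, h4⟩
    have := (List.getElem?_eq_some_iff.1 h3).1
    exact ⟨by omega, ⟨h1, h2, h3⟩, fun k h5 _ _ h6 => h4 k h5 h6⟩

/-! Interval version of condensedness -/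

def src : RLetter A → ℕ → ℕ → ℕ
  | .X _, i, _ => i
  | .Y _, _, j => j

def nI : List (RLetter A) → ℕ → ℕ → ℕ
  | .X _ :: _, _, p => p
  | _, i, _ => i

def nJ : List (RLetter A) → ℕ → ℕ → ℕ
  | .X _ :: _, _, j => j
  | _, p, _ => p

def DI (u : List A) : ℕ → ℕ → List (RLetter A) → Prop
  | _, _, [] => True
  | i, j, z :: s => ∃ p, stepR u z (src z i j) = some p ∧ i < p ∧ p < j ∧
      DI u (nI s i p) (nJ s p j) s

def CG (u : List A) (i0 j0 : ℕ) (z : RLetter A) (t : List (RLetter A)) : Prop :=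
  ∃ (p : ℕ) (i j : ℕ → ℕ),
    evalFrom u (z :: t) (src z i0 j0) = some p ∧
    i 0 = i0 ∧ j 0 = j0 ∧
    (∀ ℓ z' w, (z :: t)[ℓ]? = some z' → (z :: t)[ℓ+1]? = some w →
        ∃ q, stepR u z' (src z' (i ℓ) (j ℓ)) = some q ∧
          i (ℓ+1) = nI [w] (i ℓ) q ∧ j (ℓ+1) = nJ [w] q (j ℓ)) ∧
    (∀ ℓ, ℓ < t.length →
        i ℓ ≤ i (ℓ+1) ∧ j (ℓ+1) ≤ j ℓ ∧ (i ℓ < i (ℓ+1) ∨ j (ℓ+1) < j ℓ)) ∧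
    i t.length < p ∧ p < j t.length

theorem condensed_iff_CG (u : List A) (z : RLetter A) (t : List (RLetter A)) :
    Condensed u (z :: t) ↔ CG u 0 (u.length + 1) z t := by
  unfold Condensed CG
  have hs : startPos u z = src z 0 (u.length+1) := by cases z <;> rfl
  constructor
  · rintro ⟨p, i, j, h1, h2, h3, hxx, hyy, hxy, hyx, hn, hp⟩
    refine ⟨p, i, j, by rw [← hs]; exact h1, h2, h3, ?_, ?_, by simpa using hp⟩
    · intro ℓ z' w h h'
      rcases z' with a | a <;> rcases w with b | b
      · exact ⟨_, (hxx (ℓ+1) a b (by omega) h h').1, rfl, (hxx (ℓ+1) a b (by omega) h h').2⟩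
      · exact ⟨_, (hxy (ℓ+1) a b (by omega) h h').2, (hxy (ℓ+1) a b (by omega) h h').1, rfl⟩
      · exact ⟨_, (hyx (ℓ+1) a b (by omega) h h').1, rfl, (hyx (ℓ+1) a b (by omega) h h').2⟩
      · exact ⟨_, (hyy (ℓ+1) a b (by omega) h h').2, (hyy (ℓ+1) a b (by omega) h h').1, rfl⟩
    · intro ℓ hℓ
      exact hn (ℓ+1) (by omega) (by simpa using hℓ)
  · rintro ⟨p, i, j, h1, h2, h3, hst, hn, hp⟩
    refine ⟨p, i, j, by rw [← hs] at h1; exact h1, h2, h3, ?_, ?_, ?_, ?_, ?_, by simpa using hp⟩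
    · rintro (_ | ℓ) a b h0 h h'
      · omega
      · obtain ⟨q, hq, e1, e2⟩ := hst ℓ _ _ h h'
        simp only [nI, nJ] at e1 e2
        subst e1
        exact ⟨hq, e2⟩
    · rintro (_ | ℓ) a b h0 h h'
      · omega
      · obtain ⟨q, hq, e1, e2⟩ := hst ℓ _ _ h h'
        simp only [nI, nJ] at e1 e2
        subst e2
        exact ⟨e1, hq⟩
    · rintro (_ | ℓ) a b h0 h h'
      · omega
      · obtain ⟨q, hq, e1, e2⟩ := hst ℓ _ _ h h'
        simp only [nI, nJ] at e1 e2
        subst e2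
        exact ⟨e1, hq⟩
    · rintro (_ | ℓ) a b h0 h h'
      · omega
      · obtain ⟨q, hq, e1, e2⟩ := hst ℓ _ _ h h'
        simp only [nI, nJ] at e1 e2
        subst e1
        exact ⟨hq, e2⟩
    · rintro (_ | ℓ) h0 h
      · omega
      · exact hn ℓ (by simpa using h)

theorem src_n (w : RLetter A) (t : List (RLetter A)) (i j p : ℕ) :
    src w (nI (w :: t) i p) (nJ (w :: t) p j) = p := by
  cases w <;> rfl

theorem CG_iff_DI (u : List A) (t : List (RLetter A)) : ∀ (z : RLetter A) (i0 j0 : ℕ),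
    CG u i0 j0 z t ↔ DI u i0 j0 (z :: t) := by
  induction t with
  | nil =>
    intro z i0 j0
    constructor
    · rintro ⟨p, i, j, h1, h2, h3, -, -, h4, h5⟩
      simp only [evalFrom, Option.bind_eq_some_iff] at h1
      obtain ⟨q, h1, h1'⟩ := h1
      cases h1'
      simp only [List.length_nil] at h4 h5
      exact ⟨p, h1, by omega, by omega, trivial⟩
    · rintro ⟨p, h1, h2, h3, -⟩
      refine ⟨p, fun _ => i0, fun _ => j0, by simp [evalFrom, h1], rfl, rfl, ?_, ?_, h2, h3⟩
      · intro ℓ z' w _ h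
        simp at h
      · intro ℓ hℓ
        simp at hℓ
  | cons w t ih =>
    intro z i0 j0
    constructor
    · rintro ⟨p, i, j, h1, h2, h3, hst, hn, h4⟩
      obtain ⟨q, hq, e1, e2⟩ := hst 0 z w rfl rfl
      have hn0 := hn 0 (by simp)
      rw [zero_add] at e1 e2
      have hmono : ∀ k, k ≤ t.length → i 1 ≤ i (k+1) ∧ j (k+1) ≤ j 1 := by
        intro k
        induction k with
        | zero => intro _; exact ⟨le_rfl, le_rfl⟩
        | succ k ihk =>
          intro hk
          have a1 := ihk (by omega)
          have a2 := hn (k+1) (by simpa using hk)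
          omega
      have hm := hmono t.length le_rfl
      simp only [List.length_cons] at h4
      subst h2 h3
      refine ⟨q, hq, ?_, ?_, ?_⟩
      · cases w <;> simp only [nI, nJ, zero_add] at e1 e2 hn0 <;> omega
      · cases w <;> simp only [nI, nJ, zero_add] at e1 e2 hn0 <;> omega
      · rw [← ih]
        refine ⟨p, fun k => i (k+1), fun k => j (k+1), ?_, ?_, ?_, ?_, ?_, ?_⟩
        · rw [src_n]
          rw [evalFrom, hq] at h1
          exact h1
        · refine Eq.trans e1 ?_; cases w <;> rfl
        · refine Eq.trans e2 ?_; cases w <;> rfl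
        · intro ℓ z' w' h h'
          exact hst (ℓ+1) z' w' (by simpa using h) (by simpa using h')
        · intro ℓ hℓ
          exact hn (ℓ+1) (by simpa using hℓ)
        · exact h4
    · rintro ⟨q, hq, hq1, hq2, hD⟩
      rw [← ih] at hD
      obtain ⟨p, i, j, h1, h2, h3, hst, hn, h4⟩ := hD
      refine ⟨p, fun k => Nat.casesOn k i0 i, fun k => Nat.casesOn k j0 j, ?_, rfl, rfl, ?_, ?_, h4⟩
      · rw [src_n] at h1
        rw [evalFrom, hq]
        exact h1
      · rintro (_ | ℓ) z' w' h h'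
        · simp only [List.getElem?_cons_zero, List.getElem?_cons_succ, zero_add,
            Option.some.injEq] at h h'
          subst h h'
          refine ⟨q, hq, ?_, ?_⟩
          · show i 0 = _
            rw [h2]; cases w <;> rfl
          · show j 0 = _
            rw [h3]; cases w <;> rfl
        · exact hst ℓ z' w' (by simpa using h) (by simpa using h')
      · rintro (_ | ℓ) hℓ
        · show i0 ≤ i 0 ∧ j 0 ≤ j0 ∧ (i0 < i 0 ∨ j 0 < j0)
          rw [h2, h3]
          cases w <;> simp only [nI, nJ] <;> omega
        · exact hn ℓ (by simpa using hℓ)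

/-! Recursive word version of condensedness -/

def side : List (RLetter A) → List A → List A → List A
  | .X _ :: _, _, u1 => u1
  | _, u0, _ => u0

def notIn : RLetter A → List A → List A → Prop
  | .X a, u0, _ => a ∉ u0
  | .Y a, _, u1 => a ∉ u1

def lt : RLetter A → A
  | .X a => a
  | .Y a => a

def C : List A → List (RLetter A) → Prop
  | _, [] => True
  | u, z :: s => ∃ u0 u1, u = u0 ++ lt z :: u1 ∧ notIn z u0 u1 ∧ C (side s u0 u1) s

theorem occ_iff (L w R : List A) (z : RLetter A) (p : ℕ) :
    (stepR (L ++ w ++ R) z (src z L.length (L.length + w.length + 1)) = some p ∧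
      L.length < p ∧ p < L.length + w.length + 1) ↔
    ∃ w0 w1, w = w0 ++ lt z :: w1 ∧ notIn z w0 w1 ∧ p = L.length + w0.length + 1 := by
  constructor
  · rintro ⟨h1, h2, h3⟩
    obtain ⟨k, rfl⟩ : ∃ k, p = L.length + k + 1 := ⟨p - L.length - 1, by omega⟩
    have hk : k < w.length := by omega
    have key : ∀ k, k < w.length → (L ++ w ++ R)[L.length + k + 1 - 1]? = w[k]? := by
      intro k hk
      rw [Nat.add_sub_cancel, List.append_assoc, List.getElem?_append_right (by omega),
        List.getElem?_append_left (by omega)]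
      congr 1; omega
    have hw : w[k]? = some (lt z) := by
      rw [← key k hk]
      cases z with
      | X a => exact ((nextOcc_spec _ _ _ _).1 h1).2.1
      | Y a => exact ((prevOcc_spec _ _ _ _).1 h1).2.2.1
    obtain ⟨_, hw'⟩ := List.getElem?_eq_some_iff.1 hw
    refine ⟨w.take k, w.drop (k+1), ?_, ?_, ?_⟩
    · rw [← hw', List.cons_getElem_drop_succ, List.take_append_drop]
    · cases z with
      | X a =>
        intro hmem
        obtain ⟨l, hl, e⟩ := List.mem_iff_getElem.1 hmem
        simp only [List.length_take] at hl
        rw [List.getElem_take] at e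
        refine ((nextOcc_spec _ _ _ _).1 h1).2.2 (L.length + l + 1) ?_ (by omega) ?_
        · simp only [src]; omega
        · rw [key l (by omega)]
          exact List.getElem?_eq_some_iff.2 ⟨_, e⟩
      | Y a =>
        intro hmem
        obtain ⟨l, hl, e⟩ := List.mem_iff_getElem.1 hmem
        simp only [List.length_drop] at hl
        rw [List.getElem_drop] at e
        refine ((prevOcc_spec _ _ _ _).1 h1).2.2.2 (L.length + (k+1+l) + 1) (by omega) ?_ ?_
        · simp only [src]; omega
        · rw [key (k+1+l) (by omega)]
          exact List.getElem?_eq_some_iff.2 ⟨_, e⟩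
    · simp only [List.length_take]; omega
  · rintro ⟨w0, w1, rfl, hn, rfl⟩
    simp only [List.length_append, List.length_cons]
    refine ⟨?_, by omega, by omega⟩
    cases z with
    | X a =>
      refine (nextOcc_spec _ _ _ _).2 ⟨by simp only [src]; omega, ?_, ?_⟩
      · rw [Nat.add_sub_cancel]
        simp [List.getElem?_append, lt]
      · intro k h1 h2 h3
        simp only [src] at h1
        obtain ⟨l, rfl⟩ : ∃ l, k = L.length + l + 1 := ⟨k - L.length - 1, by omega⟩
        rw [Nat.add_sub_cancel, List.append_assoc, List.getElem?_append_right (by omega),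
          List.append_assoc, List.getElem?_append_left (by omega)] at h3
        exact hn (List.mem_of_getElem? h3)
    | Y a =>
      refine (prevOcc_spec _ _ _ _).2 ⟨by omega, by simp only [src]; omega, ?_, ?_⟩
      · rw [Nat.add_sub_cancel]
        simp [List.getElem?_append, lt]
      · intro k h1 h2 h3
        simp only [src] at h2
        obtain ⟨l, rfl⟩ : ∃ l, k = L.length + w0.length + 1 + l + 1 :=
          ⟨k - L.length - w0.length - 1 - 1, by omega⟩
        have e : L ++ (w0 ++ lt (RLetter.Y a) :: w1) ++ R =
            (L ++ w0 ++ [lt (RLetter.Y a)]) ++ (w1 ++ R) := by simp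
        rw [Nat.add_sub_cancel, e, List.getElem?_append_right (by simp; omega),
          List.getElem?_append_left (by simp; omega)] at h3
        exact hn (List.mem_of_getElem? h3)

theorem DI_iff_C (r : List (RLetter A)) : ∀ (L w R : List A),
    DI (L ++ w ++ R) L.length (L.length + w.length + 1) r ↔ C w r := by
  induction r with
  | nil => intro L w R; simp [DI, C]
  | cons z s ih =>
    intro L w R
    have step : ∀ w0 w1 : List A, w = w0 ++ lt z :: w1 →
        (DI (L ++ w ++ R) (nI s L.length (L.length + w0.length + 1))
          (nJ s (L.length + w0.length + 1) (L.length + w.length + 1)) s ↔ C (side s w0 w1) s) := by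
      rintro w0 w1 rfl
      rcases s with _ | ⟨_ | _, t⟩
      · simp [DI, C]
      · have := ih (L ++ w0 ++ [lt z]) w1 R
        simp only [nI, nJ, side]
        rw [← this]
        have e : L ++ (w0 ++ lt z :: w1) ++ R = L ++ w0 ++ [lt z] ++ w1 ++ R := by simp
        rw [e]
        simp only [List.length_append, List.length_cons, List.length_nil]
        have e2 : L.length + (w0.length + (w1.length + 1)) + 1 =
          L.length + w0.length + (0 + 1) + w1.length + 1 := by omega
        rw [e2]
      · have := ih L w0 (lt z :: w1 ++ R)
        simp only [nI, nJ, side]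
        rw [← this]
        have e : L ++ (w0 ++ lt z :: w1) ++ R = L ++ w0 ++ (lt z :: w1 ++ R) := by simp
        rw [e]
    rw [DI, C]
    constructor
    · rintro ⟨p, h1, h2, h3, h4⟩
      obtain ⟨w0, w1, e, hn, rfl⟩ := (occ_iff L w R z p).1 ⟨h1, h2, h3⟩
      exact ⟨w0, w1, e, hn, (step w0 w1 e).1 h4⟩
    · rintro ⟨w0, w1, e, hn, h4⟩
      obtain ⟨h1, h2, h3⟩ := (occ_iff L w R z _).2 ⟨w0, w1, e, hn, rfl⟩
      exact ⟨_, h1, h2, h3, (step w0 w1 e).2 h4⟩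

theorem condensed_iff (u : List A) (z : RLetter A) (t : List (RLetter A)) :
    Condensed u (z :: t) ↔ C u (z :: t) := by
  rw [condensed_iff_CG, CG_iff_DI]
  have := DI_iff_C (z :: t) [] u []
  simpa using this

/-! Basic facts about `C` -/

theorem uniq (a : A) : ∀ (x x' y y' : List A), x ++ a :: y = x' ++ a :: y' → a ∉ x → a ∉ x' →
    x = x' ∧ y = y' := by
  intro x
  induction x with
  | nil =>
    rintro (_ | ⟨b, x'⟩) y y' h h1 h2
    · simpa using h
    · simp at h; simp [h.1] at h2
  | cons c x ih =>
    rintro (_ | ⟨b, x'⟩) y y' h h1 h2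
    · simp at h; simp [h.1] at h1
    · simp only [List.cons_append, List.cons.injEq] at h
      simp only [List.mem_cons, not_or] at h1 h2
      obtain ⟨e1, e2⟩ := ih x' y y' h.2 h1.2 h2.2
      exact ⟨by rw [h.1, e1], e2⟩

theorem exists_first (a : A) (x : List A) (h : a ∈ x) :
    ∃ x0 x1, x = x0 ++ a :: x1 ∧ a ∉ x0 := by
  obtain ⟨s, t, e, hn⟩ := List.append_of_mem h |> fun _ => List.eq_append_cons_of_mem h
  exact ⟨s, t, e, hn⟩

theorem C_X (x0 x1 : List A) (a : A) (s : List (RLetter A)) (h : a ∉ x0) :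
    C (x0 ++ a :: x1) (.X a :: s) ↔ C (side s x0 x1) s := by
  constructor
  · rintro ⟨y0, y1, e, hn, hc⟩
    obtain ⟨rfl, rfl⟩ := uniq a _ _ _ _ e h hn
    exact hc
  · intro hc
    exact ⟨x0, x1, rfl, h, hc⟩

def fl : RLetter A → RLetter A
  | .X a => .Y a
  | .Y a => .X a

theorem fl_fl (r : List (RLetter A)) : (r.map fl).map fl = r := by
  rw [List.map_map]
  have : (fl ∘ fl : RLetter A → RLetter A) = id := by
    funext z; cases z <;> rfl
  rw [this, List.map_id]

theorem C_flip1 (r : List (RLetter A)) : ∀ u : List A, C u r → C u.reverse (r.map fl) := by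
  induction r with
  | nil => intro u _; trivial
  | cons z s ih =>
    rintro u ⟨u0, u1, rfl, hn, hc⟩
    have hs : C (side (s.map fl) u1.reverse u0.reverse) (s.map fl) := by
      have := ih _ hc
      rcases s with _ | ⟨_ | _, t⟩
      · trivial
      · exact this
      · exact this
    refine ⟨u1.reverse, u0.reverse, ?_, ?_, hs⟩
    · cases z <;> simp [lt, fl]
    · cases z <;> simpa [notIn, fl] using hn

theorem C_flip (r : List (RLetter A)) (u : List A) : C u.reverse (r.map fl) ↔ C u r := by
  refine ⟨fun h => ?_, C_flip1 r u⟩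
  have := C_flip1 _ _ h
  rwa [fl_fl, List.reverse_reverse] at this

theorem nb_flip : ∀ r : List (RLetter A), numBlocks (r.map fl) = numBlocks r
  | [] => rfl
  | [_] => rfl
  | z :: w :: t => by
    have := nb_flip (w :: t)
    simp only [List.map_cons] at this ⊢
    rw [numBlocks, numBlocks, this]
    cases z <;> cases w <;> rfl

theorem cons_sublist_first (a : A) (w x0 x1 : List A) (h : a ∉ x0) :
    (a :: w).Sublist (x0 ++ a :: x1) ↔ w.Sublist x1 := by
  induction x0 with
  | nil => simp
  | cons c x0 ih =>
    simp only [List.mem_cons, not_or] at h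
    rw [List.cons_append, List.cons_sublist_cons', ih h.2]
    constructor
    · rintro (h' | h')
      · exact h'
      · exact absurd h'.1 h.1
    · exact Or.inl

theorem C_mapX (w : List A) : ∀ x : List A, C x (w.map .X) ↔ w.Sublist x := by
  induction w with
  | nil => intro x; simp [C]
  | cons a w ih =>
    intro x
    have hs : ∀ x0 x1 : List A, C (side (w.map .X) x0 x1) (w.map .X) ↔ w.Sublist x1 := by
      intro x0 x1
      rcases w with _ | ⟨b, w⟩
      · simp [C]
      · exact ih x1
    by_cases h : a ∈ x
    · obtain ⟨x0, x1, rfl, hn⟩ := exists_first a x h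
      rw [cons_sublist_first a w x0 x1 hn, List.map_cons, C_X _ _ _ _ hn]
      exact hs x0 x1
    · constructor
      · rintro ⟨x0, x1, rfl, _⟩
        simp [lt] at h
      · intro h'
        exact absurd (h'.subset (by simp)) h

theorem C_mapY (w : List A) (x : List A) : C x (w.map .Y) ↔ w.reverse.Sublist x := by
  rw [← C_flip, List.map_map]
  have : (fl ∘ RLetter.Y : A → RLetter A) = RLetter.X := rfl
  rw [this, C_mapX]
  rw [← List.reverse_sublist, List.reverse_reverse]

theorem C_pre (c : A) (t : List (RLetter A)) (w : List A) : ∀ (x T : List A), w ≠ [] →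
    (C x (w.map .X ++ .Y c :: t) ↔
      C (x ++ T) (w.map .X ++ .Y c :: t) ∧ w.Sublist x) := by
  induction w with
  | nil => intro x T h; exact absurd rfl h
  | cons b w ih =>
    intro x T _
    by_cases h : b ∈ x
    · obtain ⟨x0, x1, rfl, hn⟩ := exists_first b x h
      rw [cons_sublist_first b w x0 x1 hn, List.map_cons, List.cons_append, C_X _ _ _ _ hn,
        List.append_assoc, List.cons_append, C_X _ _ _ _ hn]
      rcases w with _ | ⟨d, w⟩
      · simp [side]
      · exact ih x1 T (by simp)
    · constructor
      · rintro ⟨x0, x1, rfl, _⟩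
        simp [lt] at h
      · intro h'
        exact absurd (h'.2.subset (by simp)) h

theorem C_suf (c : A) (t : List (RLetter A)) (w : List A) (x T : List A) (h : w ≠ []) :
    C x (w.map .Y ++ .X c :: t) ↔
      C (T ++ x) (w.map .Y ++ .X c :: t) ∧ w.reverse.Sublist x := by
  have := C_pre c (t.map fl) w x.reverse T.reverse h
  have e : (w.map RLetter.X ++ RLetter.Y c :: t.map fl) =
      (w.map RLetter.Y ++ RLetter.X c :: t).map fl := by
    simp [fl, Function.comp_def]
  rw [e, ← List.reverse_append, C_flip, C_flip] at this
  rw [this, ← List.reverse_sublist, List.reverse_reverse]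

theorem nb_pos (z : RLetter A) : ∀ t : List (RLetter A), 1 ≤ numBlocks (z :: t) := by
  intro t
  induction t generalizing z with
  | nil => simp [numBlocks]
  | cons w t ih => rw [numBlocks]; have := ih w; omega

theorem nb_mapX (w : List A) (h : w ≠ []) : numBlocks (w.map RLetter.X) = 1 := by
  induction w with
  | nil => exact absurd rfl h
  | cons a w ih =>
    rcases w with _ | ⟨b, w⟩
    · rfl
    · have := ih (by simp)
      simp only [List.map_cons] at this ⊢
      rw [numBlocks, this]; rfl

theorem nb_mapY (w : List A) (h : w ≠ []) : numBlocks (w.map RLetter.Y) = 1 := by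
  have := nb_flip (w.map RLetter.X)
  rw [nb_mapX w h, List.map_map] at this
  exact this

theorem decompX (r : List (RLetter A)) : ∀ a, ∃ w : List A, w ≠ [] ∧ w.length ≤ r.length + 1 ∧
    (RLetter.X a :: r = w.map .X ∨ ∃ c t, RLetter.X a :: r = w.map .X ++ .Y c :: t) := by
  induction r with
  | nil => intro a; exact ⟨[a], by simp, by simp, Or.inl rfl⟩
  | cons z r ih =>
    intro a
    cases z with
    | X b =>
      obtain ⟨w, h1, h2, h3⟩ := ih b
      refine ⟨a :: w, by simp, by simpa using h2, ?_⟩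
      rcases h3 with h3 | ⟨c, t, h3⟩
      · left; rw [h3]; rfl
      · right; exact ⟨c, t, by rw [h3]; rfl⟩
    | Y b => exact ⟨[a], by simp, by simp, Or.inr ⟨b, r, rfl⟩⟩

theorem decompY (r : List (RLetter A)) (a : A) : ∃ w : List A, w ≠ [] ∧ w.length ≤ r.length + 1 ∧
    (RLetter.Y a :: r = w.map .Y ∨ ∃ c t, RLetter.Y a :: r = w.map .Y ++ .X c :: t) := by
  obtain ⟨w, h1, h2, h3⟩ := decompX (r.map fl) a
  refine ⟨w, h1, by simpa using h2, ?_⟩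
  have e0 : RLetter.Y a :: r = (RLetter.X a :: r.map fl).map fl := by
    rw [List.map_cons, fl_fl]; rfl
  rcases h3 with h3 | ⟨c, t, h3⟩
  · left
    rw [e0, h3, List.map_map]; rfl
  · right
    refine ⟨c, t.map fl, ?_⟩
    rw [e0, h3, List.map_append, List.map_map]; rfl

/-! The relations -/

def T (m n : ℕ) (u v : List A) : Prop :=
  (∀ a s, numBlocks (.X a :: s) ≤ m → s.length + 1 ≤ n → (C u (.X a :: s) ↔ C v (.X a :: s))) ∧
  (∀ a s, numBlocks (.Y a :: s) < m → s.length + 1 < n → (C u (.Y a :: s) ↔ C v (.Y a :: s)))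

def T' (m n : ℕ) (u v : List A) : Prop :=
  (∀ a s, numBlocks (.Y a :: s) ≤ m → s.length + 1 ≤ n → (C u (.Y a :: s) ↔ C v (.Y a :: s))) ∧
  (∀ a s, numBlocks (.X a :: s) < m → s.length + 1 < n → (C u (.X a :: s) ↔ C v (.X a :: s)))

theorem trir_iff (m n : ℕ) (u v : List A) : trir m n u v ↔ T m n u v := by
  constructor
  · intro h
    refine ⟨fun a s h1 h2 => ?_, fun a s h1 h2 => ?_⟩
    · rw [← condensed_iff, ← condensed_iff]
      exact h _ (Or.inl ⟨_, _, h1, h2, rfl, by simp, a, s, rfl⟩)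
    · rw [← condensed_iff, ← condensed_iff]
      exact h _ (Or.inr ⟨_, _, h1, h2, rfl, by simp, a, s, rfl⟩)
  · rintro ⟨h1, h2⟩ r (⟨m', n', hm, hn, rfl, rfl, a, s, rfl⟩ | ⟨m', n', hm, hn, rfl, rfl, a, s, rfl⟩)
    · rw [condensed_iff, condensed_iff]
      exact h1 a s hm (by simpa using hn)
    · rw [condensed_iff, condensed_iff]
      exact h2 a s hm (by simpa using hn)

theorem tril_iff (m n : ℕ) (u v : List A) : tril m n u v ↔ T' m n u v := by
  constructor
  · intro h
    refine ⟨fun a s h1 h2 => ?_, fun a s h1 h2 => ?_⟩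
    · rw [← condensed_iff, ← condensed_iff]
      exact h _ (Or.inl ⟨_, _, h1, h2, rfl, by simp, a, s, rfl⟩)
    · rw [← condensed_iff, ← condensed_iff]
      exact h _ (Or.inr ⟨_, _, h1, h2, rfl, by simp, a, s, rfl⟩)
  · rintro ⟨h1, h2⟩ r (⟨m', n', hm, hn, rfl, rfl, a, s, rfl⟩ | ⟨m', n', hm, hn, rfl, rfl, a, s, rfl⟩)
    · rw [condensed_iff, condensed_iff]
      exact h1 a s hm (by simpa using hn)
    · rw [condensed_iff, condensed_iff]
      exact h2 a s hm (by simpa using hn)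

theorem T'_iff (m n : ℕ) (u v : List A) : T' m n u v ↔ T m n u.reverse v.reverse := by
  constructor
  · rintro ⟨h1, h2⟩
    refine ⟨fun a s h3 h4 => ?_, fun a s h3 h4 => ?_⟩
    · rw [← C_flip, ← C_flip _ v.reverse, List.reverse_reverse, List.reverse_reverse]
      refine h1 a (s.map fl) ?_ (by simpa using h4)
      rw [← nb_flip] at h3; exact h3
    · rw [← C_flip, ← C_flip _ v.reverse, List.reverse_reverse, List.reverse_reverse]
      refine h2 a (s.map fl) ?_ (by simpa using h4)
      rw [← nb_flip] at h3; exact h3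
  · rintro ⟨h1, h2⟩
    refine ⟨fun a s h3 h4 => ?_, fun a s h3 h4 => ?_⟩
    · rw [← C_flip, ← C_flip _ v]
      refine h1 a (s.map fl) ?_ (by simpa using h4)
      rw [← nb_flip] at h3; exact h3
    · rw [← C_flip, ← C_flip _ v]
      refine h2 a (s.map fl) ?_ (by simpa using h4)
      rw [← nb_flip] at h3; exact h3

theorem T.symm {m n : ℕ} {u v : List A} (h : T m n u v) : T m n v u :=
  ⟨fun a s h1 h2 => (h.1 a s h1 h2).symm, fun a s h1 h2 => (h.2 a s h1 h2).symm⟩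

theorem T.weak {m n : ℕ} {u v : List A} (h : T (m+1) (n+1) u v) : T' m n u v :=
  ⟨fun a s h1 h2 => h.2 a s (by omega) (by omega), fun a s h1 h2 => h.1 a s (by omega) (by omega)⟩

theorem T.sub {m n : ℕ} {u v : List A} (h : T m n u v) (w : List A) (hm : 1 ≤ m)
    (hw : w.length ≤ n) : w.Sublist u ↔ w.Sublist v := by
  rcases w with _ | ⟨a, w⟩
  · simp
  · rw [← C_mapX, ← C_mapX]
    refine h.1 a (w.map .X) ?_ (by simpa using hw)
    have := nb_mapX (a :: w) (by simp)
    rw [List.map_cons] at this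
    omega

theorem T.first {m n : ℕ} {x0 x1 y : List A} {a : A} (h : T (m+1) (n+1) (x0 ++ a :: x1) y)
    (ha : a ∉ x0) : ∃ y0 y1, y = y0 ++ a :: y1 ∧ a ∉ y0 ∧ T (m+1) n x1 y1 ∧ T' m n x0 y0 := by
  have hay : a ∈ y := by
    have := (h.sub [a] (by omega) (by simp)).1 (by simp)
    simpa using this
  obtain ⟨y0, y1, rfl, hy⟩ := exists_first a y hay
  have key0 : ∀ w : List A, w ≠ [] → 1 ≤ m → w.length ≤ n → (w.Sublist x0 ↔ w.Sublist y0) := by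
    intro w hw hm hn
    obtain ⟨b, w', e⟩ : ∃ b w', w.reverse = b :: w' := by
      rcases h : w.reverse with _ | ⟨b, w'⟩
      · simp at h; exact absurd h hw
      · exact ⟨b, w', rfl⟩
    have hl : w.length = w'.length + 1 := by rw [← List.length_reverse, e]; rfl
    have h2 := h.1 a ((b :: w').map .Y) (by
      have := nb_mapY (b :: w') (by simp)
      rw [List.map_cons] at this ⊢
      rw [numBlocks, this]
      simp [sameDir]; omega) (by simp; omega)
    rw [C_X _ _ _ _ ha, C_X _ _ _ _ hy] at h2
    simp only [List.map_cons, side] at h2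
    rw [← List.map_cons (f := RLetter.Y), C_mapY, C_mapY, ← e, List.reverse_reverse] at h2
    exact h2
  have key1 : ∀ w : List A, w.length ≤ n → (w.Sublist x1 ↔ w.Sublist y1) := by
    intro w hw
    have := h.sub (a :: w) (by omega) (by simpa using hw)
    rwa [cons_sublist_first _ _ _ _ ha, cons_sublist_first _ _ _ _ hy] at this
  refine ⟨y0, y1, rfl, hy, ⟨?_, ?_⟩, ⟨?_, ?_⟩⟩
  · intro b s h1 h2
    have := h.1 a (.X b :: s) (by rw [numBlocks]; simpa [sameDir] using h1) (by simpa using h2)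
    rwa [C_X _ _ _ _ ha, C_X _ _ _ _ hy] at this
  · intro b s h1 h2
    obtain ⟨w, hw0, hw, e | ⟨c, t, e⟩⟩ := decompY s b
    · rw [e, C_mapY, C_mapY]
      exact key1 _ (by simp; omega)
    · have h3 := h.2 b s h1 (by omega)
      rw [e] at h3 ⊢
      rw [C_suf c t w x1 (x0 ++ [a]) hw0, C_suf c t w y1 (y0 ++ [a]) hw0]
      simp only [List.append_assoc, List.singleton_append]
      rw [h3, key1 w.reverse (by simp; omega)]
  · intro b s h1 h2
    have := h.1 a (.Y b :: s) (by rw [numBlocks]; simp [sameDir]; omega) (by simpa using h2)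
    rwa [C_X _ _ _ _ ha, C_X _ _ _ _ hy] at this
  · intro b s h1 h2
    obtain ⟨w, hw0, hw, e | ⟨c, t, e⟩⟩ := decompX s b
    · rw [e, C_mapX, C_mapX]
      exact key0 w hw0 (by omega) (by omega)
    · have h3 := h.1 b s (by omega) (by omega)
      rw [e] at h3 ⊢
      rw [C_pre c t w x0 (a :: x1) hw0, C_pre c t w y0 (a :: y1) hw0, h3,
        key0 w hw0 (by omega) (by omega)]

theorem T.zero (m : ℕ) (u v : List A) : T m 0 u v :=
  ⟨fun _ _ _ h => by omega, fun _ _ _ h => by omega⟩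

theorem T.zero' (n : ℕ) (u v : List A) : T 0 n u v :=
  ⟨fun a s h _ => by have := nb_pos (.X a) s; omega, fun _ _ h _ => by omega⟩

/-- Criterion for proving `T`. -/
theorem T.step {P : List A → List A → Prop} (hP : ∀ x y, P x y → P y x) {m n : ℕ}
    (h1 : ∀ x y, P x y → T' m n x y)
    (h2 : ∀ x y b s, P x y → numBlocks (.X b :: s) ≤ m + 1 → s.length ≤ n →
      C x (.X b :: s) → C y (.X b :: s)) {x y : List A} (h : P x y) : T (m+1) (n+1) x y :=
  ⟨fun b s h3 h4 => ⟨h2 x y b s h h3 (by omega), h2 y x b s (hP _ _ h) h3 (by omega)⟩,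
   fun b s h3 h4 => (h1 x y h).1 b s (by omega) (by omega)⟩

/-- Transfer of the continuation. -/
theorem T.cont {m n : ℕ} {x0 x1 y0 y1 : List A} {b : A} {s : List (RLetter A)}
    (h : numBlocks (.X b :: s) ≤ m + 1) (hs : s.length ≤ n)
    (h1 : T (m+1) n x1 y1) (h0 : T' m n x0 y0) (hc : C (side s x0 x1) s) :
    C (side s y0 y1) s := by
  rcases s with _ | ⟨c | c, s⟩
  · trivial
  · refine (h1.1 c s ?_ (by simpa using hs)).1 hc
    rw [numBlocks] at h; simpa [sameDir] using h
  · refine (h0.1 c s ?_ (by simpa using hs)).1 hc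
    rw [numBlocks] at h; simp [sameDir] at h; omega

theorem T.congr1 (n : ℕ) : ∀ (m : ℕ) (c : A) (x y : List A), T m n x y →
    T m n (c :: x) (c :: y) ∧ T m n (x ++ [c]) (y ++ [c]) := by
  induction n with
  | zero => intro m c x y _; exact ⟨T.zero _ _ _, T.zero _ _ _⟩
  | succ n ih =>
    rintro (_ | m) c x y h
    · exact ⟨T.zero' _ _ _, T.zero' _ _ _⟩
    have ihL : ∀ x y : List A, T' m n x y → T' m n (c :: x) (c :: y) := by
      intro x y h
      rw [T'_iff] at h ⊢
      simpa using (ih m c _ _ h).2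
    have ihR : ∀ x y : List A, T' m n x y → T' m n (x ++ [c]) (y ++ [c]) := by
      intro x y h
      rw [T'_iff] at h ⊢
      simpa using (ih m c _ _ h).1
    constructor
    · refine T.step (P := fun z z' => ∃ x y, z = c :: x ∧ z' = c :: y ∧ T (m+1) (n+1) x y)
        ?_ ?_ ?_ ⟨x, y, rfl, rfl, h⟩
      · rintro _ _ ⟨x, y, rfl, rfl, h⟩
        exact ⟨y, x, rfl, rfl, h.symm⟩
      · rintro _ _ ⟨x, y, rfl, rfl, h⟩
        exact ihL _ _ h.weak
      · rintro _ _ b s ⟨x, y, rfl, rfl, h⟩ hb hs hc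
        by_cases hbc : b = c
        · subst hbc
          have e : ∀ z : List A, b :: z = [] ++ b :: z := fun _ => rfl
          rw [e, C_X _ _ _ _ (by simp)] at hc ⊢
          refine T.cont hb hs ⟨fun a s h1 h2 => h.1 a s h1 (by omega),
            fun a s h1 h2 => h.2 a s h1 (by omega)⟩ ?_ hc
          exact ⟨fun _ _ _ _ => Iff.rfl, fun _ _ _ _ => Iff.rfl⟩
        · have hbx : b ∈ x := by
            obtain ⟨z0, z1, e, _⟩ := hc
            have : b ∈ c :: x := by rw [e]; simp [lt]
            simpa [hbc] using this
          obtain ⟨x0, x1, rfl, hx⟩ := exists_first b x hbx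
          obtain ⟨y0, y1, rfl, hy, h1, h0⟩ := h.first hx
          rw [← List.cons_append, C_X _ _ _ _ (by simp [hbc, hx])] at hc
          rw [← List.cons_append, C_X _ _ _ _ (by simp [hbc, hy])]
          exact T.cont hb hs h1 (ihL _ _ h0) hc
    · refine T.step (P := fun z z' => ∃ x y, z = x ++ [c] ∧ z' = y ++ [c] ∧ T (m+1) (n+1) x y)
        ?_ ?_ ?_ ⟨x, y, rfl, rfl, h⟩
      · rintro _ _ ⟨x, y, rfl, rfl, h⟩
        exact ⟨y, x, rfl, rfl, h.symm⟩
      · rintro _ _ ⟨x, y, rfl, rfl, h⟩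
        exact ihR _ _ h.weak
      · rintro _ _ b s ⟨x, y, rfl, rfl, h⟩ hb hs hc
        by_cases hbx : b ∈ x
        · obtain ⟨x0, x1, rfl, hx⟩ := exists_first b x hbx
          obtain ⟨y0, y1, rfl, hy, h1, h0⟩ := h.first hx
          rw [List.append_assoc, List.cons_append, C_X _ _ _ _ hx] at hc
          rw [List.append_assoc, List.cons_append, C_X _ _ _ _ hy]
          exact T.cont hb hs (ih _ c _ _ h1).2 h0 hc
        · have hbc : b = c := by
            obtain ⟨z0, z1, e, _⟩ := hc
            have : b ∈ x ++ [c] := by rw [e]; simp [lt]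
            simpa [hbx] using this
          subst hbc
          have hby : b ∉ y := by
            have := h.sub [b] (by omega) (by simp)
            simp only [List.singleton_sublist] at this
            rwa [← this]
          rw [C_X _ _ _ _ hbx] at hc
          rw [C_X _ _ _ _ hby]
          refine T.cont hb hs ?_ h.weak hc
          exact ⟨fun _ _ _ _ => Iff.rfl, fun _ _ _ _ => Iff.rfl⟩

theorem T.congrL {m n : ℕ} (p : List A) {x y : List A} (h : T m n x y) :
    T m n (p ++ x) (p ++ y) := by
  induction p with
  | nil => exact h
  | cons c p ih => exact (T.congr1 n m c _ _ ih).1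

theorem T.congrR {m n : ℕ} (p : List A) : ∀ {x y : List A}, T m n x y →
    T m n (x ++ p) (y ++ p) := by
  induction p with
  | nil => intro x y h; simpa using h
  | cons c p ih =>
    intro x y h
    have := ih (T.congr1 n m c _ _ h).2
    simpa using this

theorem T'.congrR {m n : ℕ} (p : List A) {x y : List A} (h : T' m n x y) :
    T' m n (x ++ p) (y ++ p) := by
  rw [T'_iff] at h ⊢
  simpa using T.congrL p.reverse h

theorem sublist_flatMap {B : Type*} (h : A → List B) (u : List A) : ∀ w : List B,
    w.Sublist (u.flatMap h) → ∃ w' : List A, w'.Sublist u ∧ w'.length ≤ w.length ∧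
      w.Sublist (w'.flatMap h) := by
  induction u with
  | nil => intro w hw; exact ⟨[], by simp, by simp, by simpa using hw⟩
  | cons a u ih =>
    intro w hw
    rw [List.flatMap_cons, List.sublist_append_iff] at hw
    obtain ⟨w1, w2, rfl, h1, h2⟩ := hw
    obtain ⟨w', h3, h4, h5⟩ := ih w2 h2
    rcases w1 with _ | ⟨b, w1⟩
    · exact ⟨w', h3.cons a, by simpa using h4, by simpa using h5⟩
    · exact ⟨a :: w', h3.cons_cons a, by simp; omega, by
        rw [List.flatMap_cons]; exact h1.append h5⟩

theorem flatMap_sub {B : Type*} (h : A → List B) {u v : List A} (huv : u.Sublist v) :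
    (u.flatMap h).Sublist (v.flatMap h) := by
  induction huv with
  | slnil => simp
  | cons a _ ih => rw [List.flatMap_cons]; exact ih.trans (List.sublist_append_right _ _)
  | cons_cons a _ ih =>
    rw [List.flatMap_cons, List.flatMap_cons]; exact (List.Sublist.refl _).append ih

theorem first_C {B : Type*} (h : A → List B) (b : B) (u : List A) (hb : b ∈ u.flatMap h) :
    ∃ u0 a u1, u = u0 ++ a :: u1 ∧ b ∈ h a ∧ b ∉ u0.flatMap h := by
  induction u with
  | nil => simp at hb
  | cons a u ih =>
    by_cases hba : b ∈ h a
    · exact ⟨[], a, u, rfl, hba, by simp⟩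
    · rw [List.flatMap_cons, List.mem_append] at hb
      obtain ⟨u0, a', u1, rfl, h1, h2⟩ := ih (hb.resolve_left hba)
      refine ⟨a :: u0, a', u1, rfl, h1, ?_⟩
      rw [List.flatMap_cons, List.mem_append]
      exact fun h => h.elim hba h2

theorem T.morph {B : Type*} [DecidableEq B] (n : ℕ) : ∀ (m : ℕ) (h : A → List B) (u v : List A),
    T m n u v → T m n (u.flatMap h) (v.flatMap h) := by
  induction n with
  | zero => intro m h u v _; exact T.zero _ _ _
  | succ n ih =>
    rintro (_ | m) h u v huv
    · exact T.zero' _ _ _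
    have ih' : ∀ x y : List A, T' m n x y → T' m n (x.flatMap h) (y.flatMap h) := by
      intro x y hxy
      rw [T'_iff] at hxy ⊢
      have := ih m (fun a => (h a).reverse) _ _ hxy
      rw [List.reverse_flatMap, List.reverse_flatMap]
      exact this
    refine T.step (P := fun z z' => ∃ x y : List A, z = x.flatMap h ∧ z' = y.flatMap h ∧
      T (m+1) (n+1) x y) ?_ ?_ ?_ ⟨u, v, rfl, rfl, huv⟩
    · rintro _ _ ⟨x, y, rfl, rfl, h⟩
      exact ⟨y, x, rfl, rfl, h.symm⟩
    · rintro _ _ ⟨x, y, rfl, rfl, h⟩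
      exact ih' _ _ h.weak
    · rintro _ _ b s ⟨x, y, rfl, rfl, hxy⟩ hb hs hc
      obtain ⟨w, hw0, hw, e | ⟨c, t, e⟩⟩ := decompX s b
      · rw [e, C_mapX] at hc ⊢
        obtain ⟨w', h1, h2, h3⟩ := sublist_flatMap h x w hc
        exact h3.trans (flatMap_sub h ((hxy.sub w' (by omega) (by omega)).1 h1))
      · have hs1 : 1 ≤ s.length := by
          rcases s with _ | ⟨_, _⟩
          · have := congrArg List.length e
            rcases w with _ | ⟨_, _⟩
            · exact absurd rfl hw0
            · simp at this
          · simp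
        have hnb : ∀ w : List B, w ≠ [] → 2 ≤ numBlocks (w.map RLetter.X ++ RLetter.Y c :: t) := by
          intro w
          induction w with
          | nil => intro h; exact absurd rfl h
          | cons d w ihw =>
            intro _
            rcases w with _ | ⟨d', w⟩
            · have := nb_pos (.Y c) t
              simp only [List.map_cons, List.map_nil, List.cons_append, List.nil_append]
              rw [numBlocks]; simp [sameDir]; omega
            · have := ihw (by simp)
              simp only [List.map_cons, List.cons_append] at this ⊢
              rw [numBlocks]; omega
        have hnb' := hnb w hw0
        rw [← e] at hnb'
        have hbx : b ∈ x.flatMap h := by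
          obtain ⟨z0, z1, e, _⟩ := hc
          rw [e]; simp [lt]
        obtain ⟨x0, a, x1, rfl, hba, hbx0⟩ := first_C h b x hbx
        have hax0 : a ∉ x0 := fun hh => hbx0 (List.mem_flatMap.2 ⟨a, hh, hba⟩)
        obtain ⟨y0, y1, rfl, hy, h1, h0⟩ := hxy.first hax0
        have hby0 : b ∉ y0.flatMap h := by
          intro hh
          obtain ⟨d, hd, hbd⟩ := List.mem_flatMap.1 hh
          have h3 := h0.1 d [] (by simp [numBlocks]; omega) (by simp; omega)
          have h4 : ∀ z : List A, C z [.Y d] ↔ d ∈ z := by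
            intro z
            have := C_mapY [d] z
            simpa using this
          rw [h4, h4] at h3
          exact hbx0 (List.mem_flatMap.2 ⟨d, h3.2 hd, hbd⟩)
        obtain ⟨p, q, epq, hp⟩ := exists_first b (h a) hba
        have e2 : ∀ z0 z1 : List A, (z0 ++ a :: z1).flatMap h =
            (z0.flatMap h ++ p) ++ b :: (q ++ z1.flatMap h) := by
          intro z0 z1
          simp [List.flatMap_append, List.flatMap_cons, epq]
        rw [e2, C_X _ _ _ _ (by simp only [List.mem_append, not_or]; exact ⟨hbx0, hp⟩)] at hc
        rw [e2, C_X _ _ _ _ (by simp only [List.mem_append, not_or]; exact ⟨hby0, hp⟩)]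
        exact T.cont hb hs (T.congrL q (ih _ h _ _ h1)) (T'.congrR p (ih' _ _ h0)) hc

theorem T'.morph {B : Type*} [DecidableEq B] (m n : ℕ) (h : A → List B) (u v : List A)
    (huv : T' m n u v) : T' m n (u.flatMap h) (v.flatMap h) := by
  rw [T'_iff] at huv ⊢
  have := T.morph n m (fun a => (h a).reverse) _ _ huv
  rw [List.reverse_flatMap, List.reverse_flatMap]
  exact this

theorem morph_eq {B : Type*} (φ : FreeMonoid A →* FreeMonoid B) (u : List A) :
    FreeMonoid.toList (φ (FreeMonoid.ofList u)) =
      u.flatMap (fun a => FreeMonoid.toList (φ (FreeMonoid.of a))) := by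
  induction u with
  | nil => simp
  | cons a u ih =>
    rw [FreeMonoid.ofList_cons, map_mul, FreeMonoid.toList_mul, ih, List.flatMap_cons]

/-- Monoid morphisms between free monoids preserve the relations
`⊳_{m,n}` and `⊲_{m,n}`. -/
theorem statement10 {B : Type*} [DecidableEq B] [Fintype A] [Fintype B]
    (m n : ℕ) (hm : 1 ≤ m) (hmn : m ≤ n)
    (φ : FreeMonoid A →* FreeMonoid B) (u v : List A) :
    (trir m n u v →
       trir m n (FreeMonoid.toList (φ (FreeMonoid.ofList u)))
                (FreeMonoid.toList (φ (FreeMonoid.ofList v)))) ∧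
    (tril m n u v →
       tril m n (FreeMonoid.toList (φ (FreeMonoid.ofList u)))
                (FreeMonoid.toList (φ (FreeMonoid.ofList v)))) := by
  rw [trir_iff, trir_iff, tril_iff, tril_iff, morph_eq, morph_eq]
  exact ⟨T.morph n m _ u v, T'.morph m n _ u v⟩


end RankerPaper
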